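/- arXiv:1907.00796 — 2 statements merged into one kernel-verified Lean document; each statement's English description precedes it below -/
import Mathlib

section
/- Fix 1 < α < 2 and t > 0, and define w : ℝ → ℝ by w(x) = inf_{y ∈ ℝ} ( −|y|^α + (x−y)²/(2t) ). Then w is finite everywhere, w is an even function of x, and w is not differentiable at x = 0. -/
/-- The time-`t` slice of the Hopf-formula solution of the eikonal equation with initial
datum `u₀(x) = -|x|^α`: `w(x) = inf_y ( -|y|^α + (x-y)²/(2t) )`. -/
noncomputable def hopfSlice (α t : ℝ) : ℝ → ℝ :=
  fun x => ⨅ y : ℝ, (-|y| ^ α + (x - y) ^ 2 / (2 * t))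

lemma hopf_young (α t : ℝ) (hα1 : 1 < α) (hα2 : α < 2) (ht : 0 < t) :
    ∃ C : ℝ, ∀ y : ℝ, |y| ^ α ≤ C + y ^ 2 / (8 * t) := by
  have h := tendsto_rpow_neg_atTop (y := 2 - α) (by linarith)
  have h8 : (0 : ℝ) < 1 / (8 * t) := by positivity
  obtain ⟨M, hM, hM0⟩ := ((h.eventually (gt_mem_nhds h8)).and
    (Filter.eventually_gt_atTop 0)).exists
  refine ⟨M ^ α, fun y => ?_⟩
  have hy2 : 0 ≤ y ^ 2 / (8 * t) := by positivity
  have hMa : 0 ≤ M ^ α := by positivity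
  rcases le_total |y| M with hy | hy
  · have := Real.rpow_le_rpow (abs_nonneg y) hy (by linarith : (0 : ℝ) ≤ α)
    linarith
  · have hy0 : 0 < |y| := lt_of_lt_of_le hM0 hy
    have h1 : |y| ^ (-(2 - α)) ≤ M ^ (-(2 - α)) :=
      Real.rpow_le_rpow_of_nonpos hM0 hy (by linarith)
    have h2 : |y| ^ α = |y| ^ (-(2 - α)) * y ^ 2 := by
      rw [← sq_abs y, ← Real.rpow_natCast |y| 2, ← Real.rpow_add hy0]
      congr 1
      push_cast
      ring
    have h3 : |y| ^ (-(2 - α)) * y ^ 2 ≤ 1 / (8 * t) * y ^ 2 :=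
      mul_le_mul_of_nonneg_right (h1.trans hM.le) (sq_nonneg y)
    have h4 : 1 / (8 * t) * y ^ 2 = y ^ 2 / (8 * t) := by ring
    linarith

lemma hopf_lower (α t : ℝ) (hα1 : 1 < α) (hα2 : α < 2) (ht : 0 < t) :
    ∃ C : ℝ, ∀ x y : ℝ, -C - x ^ 2 / (2 * t) + y ^ 2 / (8 * t)
      ≤ -|y| ^ α + (x - y) ^ 2 / (2 * t) := by
  obtain ⟨C, hC⟩ := hopf_young α t hα1 hα2 ht
  refine ⟨C, fun x y => ?_⟩
  have h := hC y
  have h1 : (x - y) ^ 2 / (2 * t) + x ^ 2 / (2 * t) - 2 * (y ^ 2 / (8 * t))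
      = (2 * x - y) ^ 2 / (4 * t) := by
    field_simp
    ring
  have h2 : 0 ≤ (2 * x - y) ^ 2 / (4 * t) := by positivity
  linarith

/-- For `1 < α < 2` and `t > 0`, the function `w = hopfSlice α t` is finite everywhere (the
infimum is over a set bounded below), is even, and is not differentiable at `x = 0`. -/
theorem stmt5 (α t : ℝ) (hα1 : 1 < α) (hα2 : α < 2) (ht : 0 < t) :
    (∀ x : ℝ, BddBelow (Set.range fun y : ℝ => -|y| ^ α + (x - y) ^ 2 / (2 * t))) ∧
    (∀ x : ℝ, hopfSlice α t (-x) = hopfSlice α t x) ∧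
    ¬ DifferentiableAt ℝ (hopfSlice α t) 0 := by
  obtain ⟨C, hC⟩ := hopf_lower α t hα1 hα2 ht
  have hb : ∀ x : ℝ, BddBelow (Set.range fun y : ℝ => -|y| ^ α + (x - y) ^ 2 / (2 * t)) := by
    intro x
    refine ⟨-C - x ^ 2 / (2 * t), ?_⟩
    rintro _ ⟨y, rfl⟩
    have : 0 ≤ y ^ 2 / (8 * t) := by positivity
    have := hC x y
    dsimp only
    linarith
  refine ⟨hb, ?_, ?_⟩
  · intro x
    unfold hopfSlice
    rw [← (Equiv.neg ℝ).iInf_comp]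
    congr 1
    funext y
    simp only [Equiv.neg_apply, abs_neg]
    congr 2
    ring
  · intro hd
    have hcont : Continuous (fun y : ℝ => -|y| ^ α + (0 - y) ^ 2 / (2 * t)) := by
      have : Continuous (fun y : ℝ => |y| ^ α) :=
        continuous_abs.rpow_const (fun _ => Or.inr (by linarith))
      fun_prop
    have hlim : Filter.Tendsto (fun y : ℝ => -|y| ^ α + (0 - y) ^ 2 / (2 * t))
        (Filter.cocompact ℝ) Filter.atTop := by
      have h1 : Filter.Tendsto (fun y : ℝ => -C + ‖y‖ ^ 2 / (8 * t))
          (Filter.cocompact ℝ) Filter.atTop :=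
        Filter.tendsto_atTop_add_const_left _ _
          (((Filter.tendsto_pow_atTop two_ne_zero).comp
            (tendsto_norm_cocompact_atTop (E := ℝ))).atTop_div_const (by positivity))
      refine Filter.tendsto_atTop_mono (fun y => ?_) h1
      have := hC 0 y
      simp only [Real.norm_eq_abs, sq_abs]
      simpa using this
    obtain ⟨z, hz⟩ := hcont.exists_forall_le hlim
    have hw0 : hopfSlice α t 0 = -|z| ^ α + (0 - z) ^ 2 / (2 * t) :=
      le_antisymm (ciInf_le (hb 0) z) (le_ciInf hz)
    have hz0 : z ≠ 0 := by
      rintro rfl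
      have hp : (0 : ℝ) < t ^ (1 / (2 - α)) := by positivity
      set y := t ^ (1 / (2 - α)) with hy
      have h1 : y ^ (2 - α) = t := by
        rw [hy, ← Real.rpow_mul ht.le, one_div_mul_cancel (by linarith), Real.rpow_one]
      have h2 : y ^ 2 = y ^ α * t := by
        rw [← h1, ← Real.rpow_add hp, ← Real.rpow_natCast]
        congr 1
        push_cast
        ring
      have h3 := hz y
      have h4 : (0 - y) ^ 2 / (2 * t) = y ^ α / 2 := by
        rw [zero_sub, neg_sq, h2]
        field_simp
      rw [h4, abs_of_pos hp, abs_zero, Real.zero_rpow (by linarith)] at h3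
      have h5 : 0 < y ^ α := by positivity
      norm_num at h3
      linarith
    have key : ∀ v : ℝ, |v| = |z| → deriv (hopfSlice α t) 0 + v / t = 0 := by
      intro v hv
      have hv2 : v ^ 2 = z ^ 2 := sq_eq_sq_iff_abs_eq_abs v z |>.2 hv
      have hder : HasDerivAt (fun x : ℝ => hopfSlice α t x - (x ^ 2 - 2 * x * v) / (2 * t))
          (deriv (hopfSlice α t) 0 + v / t) 0 := by
        have h1 : HasDerivAt (fun x : ℝ => (x ^ 2 - 2 * x * v) / (2 * t))
            ((2 * (0 : ℝ) ^ 1 * 1 - 2 * 1 * v) / (2 * t)) 0 := by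
          have := (((hasDerivAt_id (0 : ℝ)).pow 2).sub
            (((hasDerivAt_id (0 : ℝ)).const_mul 2).mul_const v)).div_const (2 * t)
          simpa using this
        have h2 := hd.hasDerivAt.sub h1
        have h5 : deriv (hopfSlice α t) 0 + v / t = deriv (hopfSlice α t) 0 -
            (2 * (0 : ℝ) ^ 1 * 1 - 2 * 1 * v) / (2 * t) := by
          field_simp
          ring
        rw [h5]
        exact h2
      refine IsLocalMax.hasDerivAt_eq_zero (Filter.Eventually.of_forall fun x => ?_) hder
      have h3 : hopfSlice α t x ≤ -|v| ^ α + (x - v) ^ 2 / (2 * t) := ciInf_le (hb x) v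
      have h4 : (x - v) ^ 2 / (2 * t) = (0 - z) ^ 2 / (2 * t) + (x ^ 2 - 2 * x * v) / (2 * t) := by
        rw [← add_div]
        congr 1
        linear_combination hv2
      rw [hv] at h3
      simp only [hw0]
      norm_num at *
      linarith
    have k1 := key z rfl
    have k2 := key (-z) (abs_neg z)
    have k3 : z / t = 0 := by
      rw [neg_div] at k2
      linarith
    exact (div_ne_zero hz0 ht.ne') k3
end

section
/- Define u₀ : ℝ → ℝ by u₀(y) = y² sin(1/y) for y ≠ 0 and u₀(0) = 0. Then proximal subdifferentiability of u₀ fails to hold with a uniform constant near 0: for every K > 0 and every r > 0 there exists y with 0 < |y| < r such that u₀ has no proximal K-subgradient at y. -/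
/-- The initial datum `u₀(y) = y² sin(1/y)` for `y ≠ 0`, `u₀(0) = 0`. -/
noncomputable def u₀ : ℝ → ℝ :=
  fun y => if y = 0 then 0 else y ^ 2 * Real.sin (1 / y)

/-- `p` is a proximal `K`-subgradient of `v : ℝ → ℝ` at `x₀`. -/
def IsProxSubgrad (v : ℝ → ℝ) (x₀ p K : ℝ) : Prop :=
  ∃ r > 0, ∀ x : ℝ, |x - x₀| < r →
    v x₀ + p * (x - x₀) - K / 2 * (x - x₀) ^ 2 ≤ v x

/-- Proximal subdifferentiability of `u₀` fails with a uniform constant near `0`: for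
every `K > 0` and every `r > 0` there is `y` with `0 < |y| < r` at which `u₀` has no
proximal `K`-subgradient. -/
theorem stmt16 :
    ∀ K > 0, ∀ r > 0, ∃ y : ℝ, 0 < |y| ∧ |y| < r ∧
      ∀ p : ℝ, ¬ IsProxSubgrad u₀ y p K := by
  intro K hK r hr
  obtain ⟨n, hn⟩ := exists_nat_gt (max 1 (max K (1 / r)))
  have hn1 : (1 : ℝ) < n := lt_of_le_of_lt (le_max_left _ _) hn
  have hnK : K < n := lt_of_le_of_lt ((le_max_left _ _).trans (le_max_right _ _)) hn
  have hnr : 1 / r < n := lt_of_le_of_lt ((le_max_right _ _).trans (le_max_right _ _)) hn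
  have hpi := Real.pi_gt_three
  obtain ⟨a, ha⟩ : ∃ a : ℝ, a = Real.pi / 2 + n * (2 * Real.pi) := ⟨_, rfl⟩
  have ha6 : 6 * (n : ℝ) < a := by rw [ha]; nlinarith
  have ha0 : 0 < a := by linarith
  have hs : ∀ t : ℝ, Real.sin (a + t) = Real.cos t := by
    intro t
    rw [ha, show Real.pi / 2 + n * (2 * Real.pi) + t = (t + Real.pi / 2) + n * (2 * Real.pi) by ring,
      Real.sin_add_nat_mul_two_pi, Real.sin_add_pi_div_two]
  have hE : 0 < -1 - K / 2 + 2 / Real.pi ^ 2 * a ^ 2 := by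
    have h1 : 2 * n * Real.pi < a := by rw [ha]; nlinarith
    have h2 : (2 * n * Real.pi) ^ 2 ≤ a ^ 2 := by
      apply pow_le_pow_left₀ _ h1.le
      positivity
    have h3 : 2 / Real.pi ^ 2 * (2 * n * Real.pi) ^ 2 ≤ 2 / Real.pi ^ 2 * a ^ 2 := by gcongr
    have h4 : 2 / Real.pi ^ 2 * (2 * n * Real.pi) ^ 2 = 8 * (n : ℝ) ^ 2 := by
      field_simp; ring
    nlinarith
  refine ⟨1 / a, by positivity, ?_, ?_⟩
  · rw [abs_of_pos (by positivity), div_lt_iff₀ ha0]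
    rw [div_lt_iff₀ hr] at hnr
    nlinarith
  rintro p ⟨ρ, hρ, h⟩
  obtain ⟨t, ht0, ht1, htρ, hq⟩ : ∃ t : ℝ, t ≠ 0 ∧ |t| ≤ 1 ∧ |t| < ρ ∧ 0 ≤ (2 - p * a) * t := by
    have hd : 0 < min 1 (ρ / 2) := lt_min one_pos (by linarith)
    have hd1 : min 1 (ρ / 2) ≤ 1 := min_le_left _ _
    have hd2 : min 1 (ρ / 2) ≤ ρ / 2 := min_le_right _ _
    rcases le_total 0 (2 - p * a) with hq | hq
    · refine ⟨min 1 (ρ / 2), hd.ne', ?_, ?_, mul_nonneg hq hd.le⟩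
      · rwa [abs_of_pos hd]
      · rw [abs_of_pos hd]; linarith
    · refine ⟨-min 1 (ρ / 2), neg_ne_zero.mpr hd.ne', ?_, ?_,
        mul_nonneg_of_nonpos_of_nonpos hq (by linarith)⟩
      · rwa [abs_neg, abs_of_pos hd]
      · rw [abs_neg, abs_of_pos hd]; linarith
  have htl := (abs_le.mp ht1).1
  have hat : 0 < a + t := by linarith
  have hdiff : 1 / (a + t) - 1 / a = -t / (a * (a + t)) := by field_simp; ring
  have hx := h (1 / (a + t)) (by
    rw [hdiff, abs_div, abs_neg, abs_of_pos (mul_pos ha0 hat)]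
    refine lt_of_le_of_lt (div_le_self (abs_nonneg t) ?_) htρ
    nlinarith)
  have hs0 := hs 0
  rw [add_zero, Real.cos_zero] at hs0
  rw [hdiff] at hx
  simp only [u₀, one_div_ne_zero ha0.ne', one_div_ne_zero hat.ne', if_false, one_div_one_div,
    hs, hs0] at hx
  have hcos : Real.cos t ≤ 1 - 2 / Real.pi ^ 2 * t ^ 2 :=
    Real.cos_le_one_sub_mul_cos_sq (by linarith)
  have hmul := mul_le_mul_of_nonneg_right hx (by positivity : 0 ≤ a ^ 2 * (a + t) ^ 2)
  have e1 : ((1 / a) ^ 2 * 1 + p * (-t / (a * (a + t))) - K / 2 * (-t / (a * (a + t))) ^ 2)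
      * (a ^ 2 * (a + t) ^ 2) = (a + t) ^ 2 - p * t * a * (a + t) - K / 2 * t ^ 2 := by
    field_simp
    ring
  have e2 : (1 / (a + t)) ^ 2 * Real.cos t * (a ^ 2 * (a + t) ^ 2) = a ^ 2 * Real.cos t := by
    field_simp
  rw [e1, e2] at hmul
  have h5 := mul_le_mul_of_nonneg_left hcos (sq_nonneg a)
  have h6 := mul_nonneg hq hat.le
  have h7 := mul_pos hE (by positivity : 0 < t ^ 2)
  linarith
end
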